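/- Let ζ ∈ (-1/2, ∞) and α ∈ (0,2]. Then there exist constants c > 0 and K > 0 (depending only on ζ and α) such that for all 0 < r ≤ s: p_ζ^{(α)}(1,1,s) ≤ K · p_ζ^{(α)}(1, c r, c s). In particular, for all r, s > 0: min{ p_ζ^{(α)}(1,1,r), p_ζ^{(α)}(1,1,s) } ≤ K · p_ζ^{(α)}(1, c r, c s). -/

import Mathlib

open MeasureTheory Real Set Filter

/-- Modified Bessel function of the first kind of order `ν`. -/
noncomputable def besselI (ν x : ℝ) : ℝ :=
  ∑' k : ℕ, (x / 2) ^ (2 * (k : ℝ) + ν) / ((Nat.factorial k : ℝ) * Real.Gamma ((k : ℝ) + ν + 1))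

/-- The Bessel heat kernel `p_ζ^{(2)}(t,r,s)`. -/
noncomputable def besselHeat (ζ t r s : ℝ) : ℝ :=
  (r * s) ^ ((1 : ℝ) / 2 - ζ) / (2 * t) * Real.exp (-(r ^ 2 + s ^ 2) / (4 * t)) *
    besselI (ζ - 1 / 2) (r * s / (2 * t))

/-- `σ` is a family of `α/2`-stable subordinator densities. -/
def IsStableSubordinatorDensity (α : ℝ) (σ : ℝ → ℝ → ℝ) : Prop :=
  (∀ t, 0 < t → ∀ τ, 0 < τ → 0 ≤ σ t τ) ∧
  (∀ t, 0 < t → Measurable (σ t)) ∧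
  (∀ t l : ℝ, 0 < t → 0 ≤ l →
    (∫ τ in Ioi (0 : ℝ), Real.exp (-τ * l) * σ t τ) = Real.exp (-t * l ^ (α / 2)))

/-- The `α/2`-subordinated Bessel heat kernel `p_ζ^{(α)}(t,r,s)`. -/
noncomputable def subKernel (ζ : ℝ) (σ : ℝ → ℝ → ℝ) (t r s : ℝ) : ℝ :=
  ∫ τ in Ioi (0 : ℝ), besselHeat ζ τ r s * σ t τ

/-- `p` is the kernel `p_ζ^{(α)}` for `α ∈ (0,2]`: the Bessel heat kernel itself when `α = 2`,
and the `α/2`-subordinated kernel when `α < 2`. -/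
def IsSubordinatedBesselKernel (ζ α : ℝ) (p : ℝ → ℝ → ℝ → ℝ) : Prop :=
  (α = 2 ∧ ∀ t r s : ℝ, p t r s = besselHeat ζ t r s) ∨
  (α < 2 ∧ ∃ σ : ℝ → ℝ → ℝ, IsStableSubordinatorDensity α σ ∧
    ∀ t r s : ℝ, p t r s = subKernel ζ σ t r s)

/-- The `k`-th term of the entire function `(x / 2) ^ (-ν) * I_ν(x)`. -/
noncomputable def besselTerm (ν x : ℝ) (k : ℕ) : ℝ :=
  (x / 2) ^ (2 * k) / ((Nat.factorial k : ℝ) * Real.Gamma ((k : ℝ) + ν + 1))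

theorem hasSum_add_one_mul_pow_div_factorial (x : ℝ) :
    HasSum (fun n : ℕ => ((n : ℝ) + 1) * (x ^ n / (n.factorial : ℝ))) ((1 + x) * Real.exp x) := by
  have h1 : HasSum (fun n : ℕ => x ^ n / (n.factorial : ℝ)) (Real.exp x) := by
    rw [Real.exp_eq_exp_ℝ]
    exact NormedSpace.expSeries_div_hasSum_exp x
  have h2 : HasSum (fun n : ℕ => (n : ℝ) * (x ^ n / (n.factorial : ℝ))) (x * Real.exp x) := by
    rw [← hasSum_nat_add_iff' 1]
    have e : (fun n : ℕ => ((n + 1 : ℕ) : ℝ) * (x ^ (n + 1) / ((n + 1).factorial : ℝ))) =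
        fun n : ℕ => x * (x ^ n / (n.factorial : ℝ)) := by
      ext n
      rw [Nat.factorial_succ]
      have : (n.factorial : ℝ) ≠ 0 := by positivity
      push_cast
      field_simp
      ring
    rw [e]
    simpa using h1.mul_left x
  convert h2.add h1 using 1
  · ext n; ring
  · ring

theorem Gamma_mul_factorial_le {ν : ℝ} (hν : -1 < ν) (k : ℕ) :
    Real.Gamma (ν + 2) * (k.factorial : ℝ) ≤ Real.Gamma (((k + 1 : ℕ) : ℝ) + ν + 1) := by
  induction k with
  | zero => simp; ring_nf; rfl
  | succ k ih =>
    have hpos : (0 : ℝ) < ((k + 1 : ℕ) : ℝ) + ν + 1 := by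
      push_cast; have : (0 : ℝ) ≤ k := by positivity
      linarith
    have h : Real.Gamma (((k + 1 + 1 : ℕ) : ℝ) + ν + 1)
        = (((k + 1 : ℕ) : ℝ) + ν + 1) * Real.Gamma (((k + 1 : ℕ) : ℝ) + ν + 1) := by
      rw [← Real.Gamma_add_one hpos.ne']
      congr 1; push_cast; ring
    rw [h, Nat.factorial_succ, Nat.cast_mul]
    calc Real.Gamma (ν + 2) * (((k + 1 : ℕ) : ℝ) * (k.factorial : ℝ))
        = ((k + 1 : ℕ) : ℝ) * (Real.Gamma (ν + 2) * (k.factorial : ℝ)) := by ring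
      _ ≤ _ := by
        gcongr
        · exact mul_nonneg (Real.Gamma_pos_of_pos (by linarith)).le (by positivity)
        · linarith

theorem exists_mul_factorial_le_Gamma {ν : ℝ} (hν : -1 < ν) :
    ∃ d : ℝ, 0 < d ∧
      ∀ k : ℕ, d * (k.factorial : ℝ) ≤ (2 * (k : ℝ) + 1) * Real.Gamma ((k : ℝ) + ν + 1) := by
  have g1 : 0 < Real.Gamma (ν + 1) := Real.Gamma_pos_of_pos (by linarith)
  have g2 : 0 < Real.Gamma (ν + 2) := Real.Gamma_pos_of_pos (by linarith)
  refine ⟨min (Real.Gamma (ν + 1)) (Real.Gamma (ν + 2)), lt_min g1 g2, fun k => ?_⟩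
  cases k with
  | zero => simp
  | succ k =>
    have hG := Gamma_mul_factorial_le hν k
    have hG0 : 0 ≤ Real.Gamma (((k + 1 : ℕ) : ℝ) + ν + 1) :=
      (mul_nonneg g2.le (by positivity)).trans hG
    calc min (Real.Gamma (ν + 1)) (Real.Gamma (ν + 2)) * ((k + 1).factorial : ℝ)
        ≤ Real.Gamma (ν + 2) * ((k + 1).factorial : ℝ) := by gcongr; exact min_le_right _ _
      _ = ((k + 1 : ℕ) : ℝ) * (Real.Gamma (ν + 2) * (k.factorial : ℝ)) := by
        rw [Nat.factorial_succ]; push_cast; ring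
      _ ≤ _ := by
        gcongr
        push_cast
        linarith [(Nat.cast_nonneg k : (0 : ℝ) ≤ k)]

theorem factorial_two_mul_le (k : ℕ) :
    ((2 * k).factorial : ℝ) ≤ 4 ^ k * ((k.factorial : ℝ) * (k.factorial : ℝ)) := by
  have h1 := Nat.centralBinom_le_four_pow k
  have h2 := Nat.choose_mul_factorial_mul_factorial (show k ≤ 2 * k by lia)
  rw [← Nat.centralBinom_eq_two_mul_choose, show 2 * k - k = k by lia] at h2
  have h3 : (2 * k).factorial ≤ 4 ^ k * (k.factorial * k.factorial) := by
    rw [← h2, mul_assoc]; gcongr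
  exact_mod_cast h3

theorem besselTerm_nonneg {ν : ℝ} (hν : -1 < ν) (x : ℝ) (k : ℕ) : 0 ≤ besselTerm ν x k := by
  have h : 0 < Real.Gamma ((k : ℝ) + ν + 1) := Real.Gamma_pos_of_pos (by
    linarith [(Nat.cast_nonneg k : (0 : ℝ) ≤ k)])
  rw [besselTerm, pow_mul]
  positivity

theorem exists_besselTerm_le {ν : ℝ} (hν : -1 < ν) :
    ∃ C : ℝ, 0 < C ∧ ∀ (x : ℝ) (k : ℕ),
      besselTerm ν x k ≤ C * ((((2 * k : ℕ) : ℝ) + 1) * (x ^ (2 * k) / ((2 * k).factorial : ℝ))) := by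
  obtain ⟨d, hd, h⟩ := exists_mul_factorial_le_Gamma hν
  refine ⟨d⁻¹, inv_pos.2 hd, fun x k => ?_⟩
  have hG : 0 < Real.Gamma ((k : ℝ) + ν + 1) := Real.Gamma_pos_of_pos (by
    linarith [(Nat.cast_nonneg k : (0 : ℝ) ≤ k)])
  have hf : (0 : ℝ) < k.factorial := by positivity
  have hf2 : (0 : ℝ) < (2 * k).factorial := by positivity
  have hx : 0 ≤ x ^ (2 * k) := by rw [pow_mul]; positivity
  have key : d * ((2 * k).factorial : ℝ) ≤
      (2 * (k : ℝ) + 1) * (4 ^ k * ((k.factorial : ℝ) * Real.Gamma ((k : ℝ) + ν + 1))) := by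
    calc d * ((2 * k).factorial : ℝ)
        ≤ d * (4 ^ k * ((k.factorial : ℝ) * (k.factorial : ℝ))) := by
          gcongr; exact factorial_two_mul_le k
      _ = 4 ^ k * (k.factorial : ℝ) * (d * (k.factorial : ℝ)) := by ring
      _ ≤ 4 ^ k * (k.factorial : ℝ) * ((2 * (k : ℝ) + 1) * Real.Gamma ((k : ℝ) + ν + 1)) := by
          exact mul_le_mul_of_nonneg_left (h k) (by positivity)
      _ = _ := by ring
  have e1 : besselTerm ν x k =
      x ^ (2 * k) / (4 ^ k * ((k.factorial : ℝ) * Real.Gamma ((k : ℝ) + ν + 1))) := by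
    rw [besselTerm, div_pow, pow_mul 2 2 k]; norm_num; rw [div_div]
  have e2 : d⁻¹ * ((((2 * k : ℕ) : ℝ) + 1) * (x ^ (2 * k) / ((2 * k).factorial : ℝ))) =
      ((2 * (k : ℝ) + 1) * x ^ (2 * k)) / (d * ((2 * k).factorial : ℝ)) := by
    push_cast; field_simp
  rw [e1, e2, div_le_div_iff₀ (by positivity) (by positivity)]
  nlinarith [mul_le_mul_of_nonneg_left key hx]

theorem summable_add_one_mul_even_pow (x : ℝ) : Summable (fun k : ℕ =>
    (((2 * k : ℕ) : ℝ) + 1) * (x ^ (2 * k) / ((2 * k).factorial : ℝ))) :=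
  (hasSum_add_one_mul_pow_div_factorial x).summable.comp_injective
    (i := fun k : ℕ => 2 * k) (fun a b h => by simpa using h)

theorem summable_besselTerm {ν : ℝ} (hν : -1 < ν) (x : ℝ) : Summable (besselTerm ν x) := by
  obtain ⟨C, -, h⟩ := exists_besselTerm_le hν
  exact Summable.of_nonneg_of_le (besselTerm_nonneg hν x) (h x)
    ((summable_add_one_mul_even_pow x).mul_left C)

theorem inv_Gamma_le_tsum_besselTerm {ν : ℝ} (hν : -1 < ν) (x : ℝ) :
    (Real.Gamma (ν + 1))⁻¹ ≤ ∑' k, besselTerm ν x k := by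
  have h := (summable_besselTerm hν x).le_tsum 0 (fun k _ => besselTerm_nonneg hν x k)
  simpa [besselTerm] using h

theorem exists_tsum_besselTerm_le {ν : ℝ} (hν : -1 < ν) :
    ∃ C : ℝ, 0 < C ∧ ∀ x : ℝ, 0 ≤ x → ∑' k, besselTerm ν x k ≤ C * ((1 + x) * Real.exp x) := by
  obtain ⟨C, hC, h⟩ := exists_besselTerm_le hν
  refine ⟨C, hC, fun x hx => ?_⟩
  calc ∑' k, besselTerm ν x k
      ≤ ∑' k : ℕ, C * ((((2 * k : ℕ) : ℝ) + 1) * (x ^ (2 * k) / ((2 * k).factorial : ℝ))) :=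
        (summable_besselTerm hν x).tsum_le_tsum (h x)
          ((summable_add_one_mul_even_pow x).mul_left C)
    _ = C * ∑' k : ℕ, (((2 * k : ℕ) : ℝ) + 1) * (x ^ (2 * k) / ((2 * k).factorial : ℝ)) :=
        tsum_mul_left
    _ ≤ C * ((1 + x) * Real.exp x) := by
        rw [← (hasSum_add_one_mul_pow_div_factorial x).tsum_eq]
        refine mul_le_mul_of_nonneg_left ?_ hC.le
        exact tsum_comp_le_tsum_of_inj (hasSum_add_one_mul_pow_div_factorial x).summable
          (fun n => by positivity) (i := fun k : ℕ => 2 * k) (fun a b h => by simpa using h)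

theorem measurable_tsum_besselTerm {ν : ℝ} (hν : -1 < ν) :
    Measurable (fun x => ∑' k, besselTerm ν x k) := by
  refine measurable_of_tendsto_metrizable
    (f := fun n x => ∑ k ∈ Finset.range n, besselTerm ν x k) (fun n => ?_) ?_
  · unfold besselTerm
    fun_prop
  · exact tendsto_pi_nhds.2 fun x => (summable_besselTerm hν x).hasSum.tendsto_sum_nat

theorem besselHeat_eq {ζ t r s : ℝ} (ht : 0 < t) (hr : 0 < r) (hs : 0 < s) :
    besselHeat ζ t r s = 4 ^ (1 / 2 - ζ) / 2 * t ^ (-(ζ + 1 / 2)) *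
      (Real.exp (-(r ^ 2 + s ^ 2) / (4 * t)) *
        ∑' k, besselTerm (ζ - 1 / 2) (r * s / (2 * t)) k) := by
  have hx : 0 < r * s / (2 * t) / 2 := by positivity
  have hI : besselI (ζ - 1 / 2) (r * s / (2 * t)) =
      (r * s / (2 * t) / 2) ^ (ζ - 1 / 2) * ∑' k, besselTerm (ζ - 1 / 2) (r * s / (2 * t)) k := by
    rw [besselI, ← tsum_mul_left]
    congr 1
    ext k
    rw [besselTerm, Real.rpow_add hx, show (2 * (k : ℝ)) = ((2 * k : ℕ) : ℝ) by push_cast; ring,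
      Real.rpow_natCast]
    ring
  have hA : (r * s) ^ ((1 : ℝ) / 2 - ζ) / (2 * t) * (r * s / (2 * t) / 2) ^ (ζ - 1 / 2) =
      4 ^ (1 / 2 - ζ) / 2 * t ^ (-(ζ + 1 / 2)) := by
    have e : r * s / (2 * t) / 2 = (r * s) * (4 * t)⁻¹ := by field_simp; norm_num
    rw [e, Real.mul_rpow (z := ζ - 1 / 2) (x := r * s) (by positivity) (by positivity),
      Real.inv_rpow (by positivity),
      ← Real.rpow_neg (by positivity), neg_sub, Real.mul_rpow (by norm_num) ht.le,
      show -(ζ + 1 / 2) = (1 / 2 - ζ) - 1 by ring, Real.rpow_sub_one ht.ne']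
    have : (r * s) ^ ((1 : ℝ) / 2 - ζ) * (r * s) ^ (ζ - 1 / 2) = 1 := by
      rw [← Real.rpow_add (by positivity)]; norm_num
    calc _ = ((r * s) ^ ((1 : ℝ) / 2 - ζ) * (r * s) ^ (ζ - 1 / 2)) *
        (4 ^ (1 / 2 - ζ) / 2 * (t ^ (1 / 2 - ζ) / t)) := by field_simp
      _ = _ := by rw [this, one_mul]
  rw [besselHeat, hI, ← hA]
  ring

theorem measurable_besselHeat_formula {ζ : ℝ} (hζ : -1 / 2 < ζ) (r s : ℝ) :
    Measurable (fun t : ℝ => 4 ^ (1 / 2 - ζ) / 2 * t ^ (-(ζ + 1 / 2)) *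
      (Real.exp (-(r ^ 2 + s ^ 2) / (4 * t)) *
        ∑' k, besselTerm (ζ - 1 / 2) (r * s / (2 * t)) k)) := by
  have h := (measurable_tsum_besselTerm (ν := ζ - 1 / 2) (by linarith)).comp
    (show Measurable fun t : ℝ => r * s / (2 * t) by fun_prop)
  have h' : Measurable (fun t : ℝ => ∑' k, besselTerm (ζ - 1 / 2) (r * s / (2 * t)) k) := h
  fun_prop

/-- Two-sided Gaussian-type bounds for the Bessel heat kernel. -/
theorem exists_besselHeat_bounds {ζ : ℝ} (hζ : -1 / 2 < ζ) :
    ∃ a C : ℝ, 0 < a ∧ 0 < C ∧ ∀ t r s : ℝ, 0 < t → 0 < r → 0 < s →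
      a * (t ^ (-(ζ + 1 / 2)) * Real.exp (-(r ^ 2 + s ^ 2) / (4 * t))) ≤ besselHeat ζ t r s ∧
      besselHeat ζ t r s ≤ C * (t ^ (-(ζ + 1 / 2)) *
        ((1 + r * s / (2 * t)) * Real.exp (-(r - s) ^ 2 / (4 * t)))) := by
  have hν : -1 < ζ - 1 / 2 := by linarith
  obtain ⟨C, hC, h⟩ := exists_tsum_besselTerm_le hν
  have hG : 0 < Real.Gamma (ζ - 1 / 2 + 1) := Real.Gamma_pos_of_pos (by linarith)
  refine ⟨4 ^ (1 / 2 - ζ) / 2 * (Real.Gamma (ζ - 1 / 2 + 1))⁻¹, 4 ^ (1 / 2 - ζ) / 2 * C,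
    by positivity, by positivity, fun t r s ht hr hs => ?_⟩
  rw [besselHeat_eq ht hr hs]
  constructor
  · calc
      _ = 4 ^ (1 / 2 - ζ) / 2 * t ^ (-(ζ + 1 / 2)) *
        (Real.exp (-(r ^ 2 + s ^ 2) / (4 * t)) * (Real.Gamma (ζ - 1 / 2 + 1))⁻¹) := by ring
      _ ≤ _ := by
        refine mul_le_mul_of_nonneg_left (mul_le_mul_of_nonneg_left ?_ (Real.exp_pos _).le)
          (by positivity)
        exact inv_Gamma_le_tsum_besselTerm hν _
  · calc
      _ ≤ 4 ^ (1 / 2 - ζ) / 2 * t ^ (-(ζ + 1 / 2)) *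
        (Real.exp (-(r ^ 2 + s ^ 2) / (4 * t)) *
          (C * ((1 + r * s / (2 * t)) * Real.exp (r * s / (2 * t))))) := by
        refine mul_le_mul_of_nonneg_left (mul_le_mul_of_nonneg_left ?_ (Real.exp_pos _).le)
          (by positivity)
        exact h _ (by positivity)
      _ = _ := by
        have e : Real.exp (-(r - s) ^ 2 / (4 * t)) =
            Real.exp (-(r ^ 2 + s ^ 2) / (4 * t)) * Real.exp (r * s / (2 * t)) := by
          rw [← Real.exp_add]; congr 1; field_simp; ring
        rw [e]; ring

theorem besselHeat_comm (ζ t r s : ℝ) : besselHeat ζ t r s = besselHeat ζ t s r := by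
  rw [besselHeat, besselHeat, mul_comm r s, add_comm (r ^ 2)]

/-- Comparison for a mixture of Bessel heat kernels over a nonzero time distribution on `(0, ∞)`
with finite negative moments. -/
theorem exists_integral_besselHeat_le {ζ : ℝ} (hζ : -1 / 2 < ζ) {μ : Measure ℝ} (hμ : μ ≠ 0)
    (hpos : ∀ᵐ t ∂μ, 0 < t) (hint : ∀ q : ℝ, 0 < q → Integrable (fun t : ℝ => t ^ (-q)) μ) :
    ∃ K : ℝ, 0 < K ∧ ∀ r s : ℝ, 0 < r → r ≤ s →
      ∫ t, besselHeat ζ t 1 s ∂μ ≤ K * ∫ t, besselHeat ζ t (1 / 2 * r) (1 / 2 * s) ∂μ := by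
  obtain ⟨a, C, ha, hC, hb⟩ := exists_besselHeat_bounds hζ
  have hw : ∀ b : ℝ, Integrable (fun t : ℝ => t ^ (-(ζ + 1 / 2)) * (1 + b / t)) μ := by
    intro b
    refine ((hint (ζ + 1 / 2) (by linarith)).add
      ((hint (ζ + 1 / 2 + 1) (by linarith)).const_mul b)).congr ?_
    filter_upwards [hpos] with t ht
    simp only [Pi.add_apply]
    rw [neg_add (ζ + 1 / 2) 1, ← sub_eq_add_neg (-(ζ + 1 / 2)), Real.rpow_sub_one ht.ne']
    ring
  have hexp : ∀ (x t : ℝ), 0 < t → Real.exp (-x ^ 2 / (4 * t)) ≤ 1 := fun x t ht =>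
    Real.exp_le_one_iff.2 (div_nonpos_of_nonpos_of_nonneg (by nlinarith [sq_nonneg x])
      (by positivity))
  have hheat : ∀ r s : ℝ, 0 < r → 0 < s → Integrable (fun t => besselHeat ζ t r s) μ := by
    intro r s hr hs
    refine ((hw (r * s / 2)).const_mul C).mono' ?_ ?_
    · refine (measurable_besselHeat_formula hζ r s).aestronglyMeasurable.congr ?_
      filter_upwards [hpos] with t ht
      exact (besselHeat_eq ht hr hs).symm
    · filter_upwards [hpos] with t ht
      obtain ⟨h1, h2⟩ := hb t r s ht hr hs
      rw [Real.norm_of_nonneg (le_trans (by positivity) h1)]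
      refine h2.trans ?_
      rw [div_div]
      gcongr
      exact mul_le_of_le_one_right (by positivity) (hexp _ _ ht)
  set v : ℝ → ℝ := fun t => a * (t ^ (-(ζ + 1 / 2)) * Real.exp (-8 / t)) with hv
  have hv0 : ∀ᵐ t ∂μ, 0 < v t := by
    filter_upwards [hpos] with t ht
    positivity
  have hvi : Integrable v μ := by
    refine ((hint (ζ + 1 / 2) (by linarith)).const_mul a).mono'
      (by fun_prop) ?_
    filter_upwards [hpos, hv0] with t ht h0
    rw [Real.norm_of_nonneg h0.le]
    refine mul_le_mul_of_nonneg_left (mul_le_of_le_one_right (by positivity) ?_) ha.le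
    exact Real.exp_le_one_iff.2 (div_nonpos_of_nonpos_of_nonneg (by norm_num) ht.le)
  have hV : 0 < ∫ t, v t ∂μ := by
    refine lt_of_le_of_ne (integral_nonneg_of_ae (hv0.mono fun t h => h.le)) fun h => hμ ?_
    have h0 := (integral_eq_zero_iff_of_nonneg_ae (hv0.mono fun t h => h.le) hvi).1 h.symm
    rw [← ae_eq_bot, ← Filter.eventually_false_iff_eq_bot]
    filter_upwards [h0, hv0] with t h1 h2
    exact h2.ne' h1
  set U : ℝ := ∫ t, C * (t ^ (-(ζ + 1 / 2)) * (1 + 4 / t)) ∂μ with hU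
  have hU0 : 0 ≤ U := by
    refine integral_nonneg_of_ae ?_
    filter_upwards [hpos] with t ht
    simp only [Pi.zero_apply]
    positivity
  refine ⟨C / a + U / ∫ t, v t ∂μ, by positivity, fun r s hr hrs => ?_⟩
  have hs : 0 < s := hr.trans_le hrs
  have hP := hheat (1 / 2 * r) (1 / 2 * s) (by positivity) (by positivity)
  have hP0 : 0 ≤ ∫ t, besselHeat ζ t (1 / 2 * r) (1 / 2 * s) ∂μ := by
    refine integral_nonneg_of_ae ?_
    filter_upwards [hpos] with t ht
    exact le_trans (by positivity)
      (hb t (1 / 2 * r) (1 / 2 * s) ht (by positivity) (by positivity)).1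
  rw [add_mul]
  rcases le_total s 8 with hs8 | hs8
  · have h1 : ∫ t, besselHeat ζ t 1 s ∂μ ≤ U := by
      refine integral_mono_ae (hheat 1 s one_pos hs) ((hw 4).const_mul C) ?_
      filter_upwards [hpos] with t ht
      refine (hb t 1 s ht one_pos hs).2.trans ?_
      refine mul_le_mul_of_nonneg_left (mul_le_mul_of_nonneg_left ?_ (by positivity)) hC.le
      refine (mul_le_of_le_one_right (by positivity) (hexp _ _ ht)).trans ?_
      have : 1 * s / (2 * t) ≤ 4 / t := by
        rw [div_le_div_iff₀ (by positivity) ht]; nlinarith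
      linarith
    have h2 : ∫ t, v t ∂μ ≤ ∫ t, besselHeat ζ t (1 / 2 * r) (1 / 2 * s) ∂μ := by
      refine integral_mono_ae hvi hP ?_
      filter_upwards [hpos] with t ht
      refine le_trans ?_ (hb t (1 / 2 * r) (1 / 2 * s) ht (by positivity) (by positivity)).1
      refine mul_le_mul_of_nonneg_left (mul_le_mul_of_nonneg_left ?_ (by positivity)) ha.le
      refine Real.exp_le_exp.2 ?_
      rw [div_le_div_iff₀ ht (by positivity)]
      have : r ^ 2 + s ^ 2 ≤ 128 := by nlinarith
      nlinarith
    calc _ ≤ U := h1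
      _ = U / (∫ t, v t ∂μ) * ∫ t, v t ∂μ := by field_simp
      _ ≤ U / (∫ t, v t ∂μ) * ∫ t, besselHeat ζ t (1 / 2 * r) (1 / 2 * s) ∂μ := by gcongr
      _ ≤ _ := le_add_of_nonneg_left (by positivity)
  · refine le_trans ?_ (le_add_of_nonneg_right (by positivity))
    rw [← integral_const_mul]
    refine integral_mono_ae (hheat 1 s one_pos hs) (hP.const_mul _) ?_
    filter_upwards [hpos] with t ht
    calc besselHeat ζ t 1 s
        ≤ C * (t ^ (-(ζ + 1 / 2)) *
          ((1 + 1 * s / (2 * t)) * Real.exp (-(1 - s) ^ 2 / (4 * t)))) :=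
          (hb t 1 s ht one_pos hs).2
      _ ≤ C * (t ^ (-(ζ + 1 / 2)) *
          Real.exp (-((1 / 2 * r) ^ 2 + (1 / 2 * s) ^ 2) / (4 * t))) := by
        refine mul_le_mul_of_nonneg_left (mul_le_mul_of_nonneg_left ?_ (by positivity)) hC.le
        have h1 : 1 + 1 * s / (2 * t) ≤ Real.exp (s / (2 * t)) := by
          rw [one_mul, add_comm]
          exact Real.add_one_le_exp _
        refine (mul_le_mul_of_nonneg_right h1 (Real.exp_pos _).le).trans ?_
        rw [← Real.exp_add]
        refine Real.exp_le_exp.2 ?_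
        rw [show s / (2 * t) + -(1 - s) ^ 2 / (4 * t) = (2 * s - (1 - s) ^ 2) / (4 * t) by
          field_simp; ring]
        refine div_le_div_of_nonneg_right ?_ (by positivity)
        nlinarith
      _ = C / a * (a * (t ^ (-(ζ + 1 / 2)) *
          Real.exp (-((1 / 2 * r) ^ 2 + (1 / 2 * s) ^ 2) / (4 * t)))) := by field_simp
      _ ≤ C / a * besselHeat ζ t (1 / 2 * r) (1 / 2 * s) := by
        refine mul_le_mul_of_nonneg_left ?_ (by positivity)
        exact (hb t (1 / 2 * r) (1 / 2 * s) ht (by positivity) (by positivity)).1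

/-- A function on `(0, ∞)` with stretched-exponential Laplace transform has finite negative
moments. -/
theorem integrableOn_rpow_neg_mul_of_laplace {β : ℝ} (hβ : 0 < β) {σ : ℝ → ℝ}
    (hσ0 : ∀ τ, 0 < τ → 0 ≤ σ τ) (hσm : Measurable σ)
    (hσ : ∀ l : ℝ, 0 ≤ l →
      (∫ τ in Ioi (0 : ℝ), Real.exp (-τ * l) * σ τ) = Real.exp (-l ^ β))
    {q : ℝ} (hq : 0 < q) :
    IntegrableOn (fun τ => τ ^ (-q) * σ τ) (Ioi 0) := by
  have hGq : 0 < Real.Gamma q := Real.Gamma_pos_of_pos hq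
  have hL : ∀ l : ℝ, 0 ≤ l → (∫⁻ τ in Ioi (0 : ℝ), ENNReal.ofReal (Real.exp (-τ * l) * σ τ)) =
      ENNReal.ofReal (Real.exp (-l ^ β)) := by
    intro l hl
    rw [← hσ l hl]
    refine (ofReal_integral_eq_lintegral_ofReal ?_ ?_).symm
    · by_contra h
      have := hσ l hl
      rw [integral_undef h] at this
      exact (Real.exp_pos _).ne this
    · filter_upwards [ae_restrict_mem measurableSet_Ioi] with τ hτ
      exact mul_nonneg (Real.exp_pos _).le (hσ0 τ hτ)
  have hE : IntegrableOn (fun l : ℝ => l ^ (q - 1) * Real.exp (-l ^ β)) (Ioi 0) := by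
    by_contra h
    have h1 := integral_rpow_mul_exp_neg_rpow hβ (show -1 < q - 1 by linarith)
    rw [integral_undef h] at h1
    have : 0 < Real.Gamma ((q - 1 + 1) / β) := Real.Gamma_pos_of_pos (by
      rw [sub_add_cancel]; positivity)
    have : 0 < 1 / β * Real.Gamma ((q - 1 + 1) / β) := by positivity
    exact this.ne h1
  have hI : ∀ τ : ℝ, 0 < τ →
      (∫⁻ l in Ioi (0 : ℝ), ENNReal.ofReal (l ^ (q - 1) * Real.exp (-(τ * l)))) =
        ENNReal.ofReal (τ ^ (-q) * Real.Gamma q) := by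
    intro τ hτ
    have h1 := Real.integral_rpow_mul_exp_neg_mul_Ioi hq hτ
    rw [one_div, Real.inv_rpow hτ.le, ← Real.rpow_neg hτ.le] at h1
    rw [← h1]
    refine (ofReal_integral_eq_lintegral_ofReal ?_ ?_).symm
    · by_contra h
      rw [integral_undef h] at h1
      have : 0 < τ ^ (-q) * Real.Gamma q := by positivity
      exact this.ne h1
    · filter_upwards [ae_restrict_mem measurableSet_Ioi] with l hl
      have : (0 : ℝ) < l := hl
      simp only [Pi.zero_apply]
      positivity
  have hswap : (∫⁻ τ in Ioi (0 : ℝ), ENNReal.ofReal (τ ^ (-q) * Real.Gamma q * σ τ)) =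
      ∫⁻ l in Ioi (0 : ℝ), ENNReal.ofReal (l ^ (q - 1) * Real.exp (-l ^ β)) := by
    calc
      _ = ∫⁻ τ in Ioi (0 : ℝ), ∫⁻ l in Ioi (0 : ℝ),
          ENNReal.ofReal (l ^ (q - 1)) * ENNReal.ofReal (Real.exp (-τ * l) * σ τ) := by
        refine setLIntegral_congr_fun measurableSet_Ioi fun τ hτ => ?_
        have hτ' : (0 : ℝ) < τ := hτ
        rw [ENNReal.ofReal_mul (by positivity), ← hI τ hτ', ← lintegral_mul_const _ (by fun_prop)]
        refine setLIntegral_congr_fun measurableSet_Ioi fun l hl => ?_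
        have hl' : (0 : ℝ) < l := hl
        rw [← ENNReal.ofReal_mul (by positivity), ← ENNReal.ofReal_mul (by positivity)]
        congr 1
        ring_nf
      _ = ∫⁻ l in Ioi (0 : ℝ), ∫⁻ τ in Ioi (0 : ℝ),
          ENNReal.ofReal (l ^ (q - 1)) * ENNReal.ofReal (Real.exp (-τ * l) * σ τ) := by
        refine lintegral_lintegral_swap (Measurable.aemeasurable ?_)
        unfold Function.uncurry
        fun_prop
      _ = _ := by
        refine setLIntegral_congr_fun measurableSet_Ioi fun l hl => ?_
        have hl' : (0 : ℝ) < l := hl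
        rw [lintegral_const_mul _ (by fun_prop), hL l hl'.le, ENNReal.ofReal_mul (by positivity)]
  have hfin : IntegrableOn (fun τ => τ ^ (-q) * Real.Gamma q * σ τ) (Ioi 0) := by
    refine ⟨by fun_prop, ?_⟩
    rw [hasFiniteIntegral_iff_ofReal, hswap]
    · exact hE.lintegral_lt_top
    · filter_upwards [ae_restrict_mem measurableSet_Ioi] with τ hτ
      have hτ' : (0 : ℝ) < τ := hτ
      exact mul_nonneg (by positivity) (hσ0 τ hτ')
  refine (hfin.const_mul (Real.Gamma q)⁻¹).congr (Filter.Eventually.of_forall fun τ => ?_)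
  simp only
  field_simp

theorem exists_measure_of_isSubordinatedBesselKernel {ζ α : ℝ} (hα0 : 0 < α)
    {p : ℝ → ℝ → ℝ → ℝ} (hp : IsSubordinatedBesselKernel ζ α p) :
    ∃ μ : Measure ℝ, μ ≠ 0 ∧ (∀ᵐ t ∂μ, 0 < t) ∧
      (∀ q : ℝ, 0 < q → Integrable (fun t : ℝ => t ^ (-q)) μ) ∧
      ∀ r s : ℝ, p 1 r s = ∫ t, besselHeat ζ t r s ∂μ := by
  rcases hp with ⟨-, hp⟩ | ⟨-, σ, ⟨hσ0, hσm, hσL⟩, hp⟩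
  · refine ⟨Measure.dirac 1, Measure.dirac_ne_zero, ?_, fun q hq => ?_, fun r s => ?_⟩
    · rw [ae_dirac_eq]; exact (one_pos : (0 : ℝ) < 1)
    · exact integrable_dirac (by simp)
    · rw [integral_dirac, hp]
  · have hm : Measurable (fun t => ENNReal.ofReal (σ 1 t)) := (hσm 1 one_pos).ennreal_ofReal
    have hlt : ∀ᵐ t ∂(volume.restrict (Ioi (0 : ℝ))), ENNReal.ofReal (σ 1 t) < ⊤ :=
      Filter.Eventually.of_forall fun t => ENNReal.ofReal_lt_top
    have hL : ∀ l : ℝ, 0 ≤ l →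
        (∫ τ in Ioi (0 : ℝ), Real.exp (-τ * l) * σ 1 τ) = Real.exp (-l ^ (α / 2)) := by
      intro l hl
      rw [hσL 1 l one_pos hl, neg_one_mul]
    refine ⟨(volume.restrict (Ioi (0 : ℝ))).withDensity fun t => ENNReal.ofReal (σ 1 t),
      fun h => ?_, ?_, fun q hq => ?_, fun r s => ?_⟩
    · rw [withDensity_eq_zero_iff hm.aemeasurable] at h
      have h1 := hL 0 le_rfl
      rw [integral_eq_zero_of_ae] at h1
      · exact (Real.exp_pos _).ne h1
      · filter_upwards [h, ae_restrict_mem measurableSet_Ioi] with t ht ht0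
        have := ENNReal.ofReal_eq_zero.1 ht
        simp [le_antisymm this (hσ0 1 one_pos t ht0)]
    · exact (withDensity_absolutelyContinuous _ _).ae_le (ae_restrict_mem measurableSet_Ioi)
    · rw [integrable_withDensity_iff hm hlt]
      refine (integrableOn_rpow_neg_mul_of_laplace (by positivity) (hσ0 1 one_pos) (hσm 1 one_pos)
        hL hq).congr ?_
      filter_upwards [ae_restrict_mem measurableSet_Ioi] with t ht
      rw [ENNReal.toReal_ofReal (hσ0 1 one_pos t ht)]
    · rw [hp, subKernel, integral_withDensity_eq_integral_toReal_smul hm hlt]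
      refine setIntegral_congr_fun measurableSet_Ioi fun t ht => ?_
      rw [ENNReal.toReal_ofReal (hσ0 1 one_pos t ht), smul_eq_mul, mul_comm]

theorem stmt18 (ζ α : ℝ) (hζ : -1/2 < ζ) (hα0 : 0 < α) (hα2 : α ≤ 2)
    (p : ℝ → ℝ → ℝ → ℝ) (hp : IsSubordinatedBesselKernel ζ α p) :
    ∃ c K : ℝ, 0 < c ∧ 0 < K ∧
      (∀ r s : ℝ, 0 < r → r ≤ s → p 1 1 s ≤ K * p 1 (c * r) (c * s)) ∧
      (∀ r s : ℝ, 0 < r → 0 < s → min (p 1 1 r) (p 1 1 s) ≤ K * p 1 (c * r) (c * s)) := by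
  obtain ⟨μ, hμ, hpos, hint, hpμ⟩ := exists_measure_of_isSubordinatedBesselKernel hα0 hp
  obtain ⟨K, hK, h⟩ := exists_integral_besselHeat_le hζ hμ hpos hint
  simp only [hpμ]
  refine ⟨1 / 2, K, by norm_num, hK, h, fun r s hr hs => ?_⟩
  rcases le_total r s with hrs | hsr
  · exact (min_le_right _ _).trans (h r s hr hrs)
  · refine (min_le_left _ _).trans ((h s r hs hsr).trans_eq ?_)
    simp only [besselHeat_comm ζ _ (1 / 2 * s)]
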